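/- The number of rational points on the 2-sphere with denominator at most T satisfies N(S²;T) = (3/(2G)) T² + O(T (log T)³), where G = L(χ₋₄,2) is Catalan's constant. -/

import Mathlib

open Finset

namespace RPS
local notation "Z" => GaussianInt

lemma card_fiber {X Y : Type} (f : X → Y) (k : ℕ) (hk : k ≠ 0)
    (h : ∀ y, Nat.card {x // f x = y} = k) : Nat.card X = Nat.card Y * k := by
  have e : ∀ y, Nonempty ({x // f x = y} ≃ Fin k) := fun y => by
    have := h y
    have hp : Nat.card {x // f x = y} ≠ 0 := by omega
    have hfin : Finite {x // f x = y} := (Nat.card_ne_zero.1 hp).2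
    exact ⟨Finite.equivFinOfCardEq this⟩
  replace e := fun y => Classical.choice (e y)
  have E : X ≃ Y × Fin k :=
    (Equiv.sigmaFiberEquiv f).symm.trans ((Equiv.sigmaCongrRight fun y => e y).trans
      (Equiv.sigmaEquivProd _ _))
  rw [Nat.card_congr E, Nat.card_prod]; simp

abbrev A (q : ℕ) : Type :=
  {x : Z × Z // IsCoprime x.1 x.2 ∧ x.1 * star x.1 + x.2 * star x.2 = (q : Z)}

abbrev W (q : ℕ) : Type := {w : ZMod q × ZMod q // w.1 ^ 2 + w.2 ^ 2 = -1}

def R (q : ℕ) (α β w : Z) : Prop := (q : Z) ∣ α * w - star β ∧ (q : Z) ∣ β * w + star α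

def red (q : ℕ) (w : Z) : ZMod q × ZMod q := ((w.re : ZMod q), (w.im : ZMod q))

lemma natCast_dvd_iff (q : ℕ) (z : Z) : (q : Z) ∣ z ↔ (q : ℤ) ∣ z.re ∧ (q : ℤ) ∣ z.im := by
  have := Zsqrtd.intCast_dvd (d := -1) (q : ℤ) z
  simpa using this

lemma red_eq_iff (q : ℕ) (w w' : Z) : red q w = red q w' ↔ (q : Z) ∣ w - w' := by
  rw [natCast_dvd_iff]
  simp only [red, Prod.mk.injEq, Zsqrtd.re_sub, Zsqrtd.im_sub]
  rw [ZMod.intCast_eq_intCast_iff_dvd_sub, ZMod.intCast_eq_intCast_iff_dvd_sub,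
    dvd_sub_comm, dvd_sub_comm (b := w'.im)]

lemma red_mem_iff (q : ℕ) (w : Z) :
    (red q w).1 ^ 2 + (red q w).2 ^ 2 = -1 ↔ (q : Z) ∣ w * star w + 1 := by
  rw [natCast_dvd_iff]
  simp only [red, Zsqrtd.re_add, Zsqrtd.im_add, Zsqrtd.re_mul, Zsqrtd.im_mul, Zsqrtd.re_star,
    Zsqrtd.im_star, Zsqrtd.re_one, Zsqrtd.im_one]
  have : (w.re * -w.im + w.im * w.re + 0) = 0 := by ring
  rw [this]
  simp only [dvd_zero, and_true]
  rw [← ZMod.intCast_zmod_eq_zero_iff_dvd]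
  push_cast
  constructor
  · intro h; linear_combination h
  · intro h; linear_combination h

lemma red_surj (q : ℕ) (v : ZMod q × ZMod q) : ∃ w, red q w = v := by
  obtain ⟨a, ha⟩ := ZMod.intCast_surjective v.1
  obtain ⟨b, hb⟩ := ZMod.intCast_surjective v.2
  exact ⟨⟨a, b⟩, by simp [red, ha, hb]⟩

/-- descent -/
lemma exists_rep (q : ℕ) : ∀ (m : ℕ) (w : Z), 0 < q → w * star w + 1 = (q : Z) * m →
    ∃ α β γ δ : Z, α * δ - β * γ = 1 ∧ α * star α + β * star β = q ∧
      star α * γ + star β * δ = w ∧ γ * star γ + δ * star δ = m := by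
  induction q using Nat.strong_induction_on with
  | _ q ih =>
    intro m w hq h
    by_cases h1 : q = 1
    · subst h1
      exact ⟨1, 0, w, 1, by simp, by simp, by simp, by simpa using h⟩
    · have hq2 : 2 ≤ q := by omega
      obtain ⟨k, w', hk, hre, him⟩ : ∃ k w' : Z, w = w' + q * k ∧ 2 * |w'.re| ≤ q ∧
          2 * |w'.im| ≤ q := by
        refine ⟨⟨(w.re - Int.bmod w.re q) / q,
          (w.im - Int.bmod w.im q) / q⟩, ⟨Int.bmod w.re q, Int.bmod w.im q⟩, ?_, ?_, ?_⟩
        · have e1 : (q : ℤ) ∣ w.re - Int.bmod w.re q := Int.dvd_self_sub_bmod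
          have e2 : (q : ℤ) ∣ w.im - Int.bmod w.im q := Int.dvd_self_sub_bmod
          have e1' := Int.mul_ediv_cancel' e1
          have e2' := Int.mul_ediv_cancel' e2
          ext
          · simp; linarith
          · simp; linarith
        · have a1 := Int.le_bmod (x := w.re) hq
          have a2 := Int.bmod_le (x := w.re) hq
          simp only
          rcases abs_cases (Int.bmod w.re q) with ⟨e, _⟩ | ⟨e, _⟩ <;> omega
        · have a1 := Int.le_bmod (x := w.im) hq
          have a2 := Int.bmod_le (x := w.im) hq
          simp only
          rcases abs_cases (Int.bmod w.im q) with ⟨e, _⟩ | ⟨e, _⟩ <;> omega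
      have hdiv : (q : Z) ∣ w' * star w' + 1 := by
        refine ⟨m - k * star w' - w' * star k - q * k * star k, ?_⟩
        rw [hk] at h
        simp only [star_add, star_mul', star_natCast] at h
        linear_combination h
      have hreal : w' * star w' + 1 = ((w'.re * w'.re + w'.im * w'.im + 1 : ℤ) : Z) := by
        ext <;> simp <;> ring
      have hdiv2 : (q : ℤ) ∣ w'.re * w'.re + w'.im * w'.im + 1 := by
        rw [hreal, natCast_dvd_iff] at hdiv
        simpa using hdiv.1
      obtain ⟨t, ht⟩ := hdiv2
      have hbound : 2 * (w'.re * w'.re + w'.im * w'.im) ≤ q * q := by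
        have e1 := abs_mul_abs_self w'.re
        have e2 := abs_mul_abs_self w'.im
        have := abs_nonneg w'.re
        have := abs_nonneg w'.im
        nlinarith
      have hqz : (2 : ℤ) ≤ q := by exact_mod_cast hq2
      have htpos : 0 < t := by
        have : 0 < (q : ℤ) * t := by rw [← ht]; nlinarith [mul_self_nonneg w'.re, mul_self_nonneg w'.im]
        exact pos_of_mul_pos_right this (by linarith) 
      have htlt : t < q := by
        by_contra hc
        push Not at hc
        nlinarith
      lift t to ℕ using htpos.le
      have htq : t < q := by exact_mod_cast htlt
      have ht0 : 0 < t := by exact_mod_cast htpos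
      obtain ⟨α, β, γ, δ, c1, c2, c3, c4⟩ := ih t htq q (-star w') ht0 (by
        have : w' * star w' + 1 = (q : Z) * t := by rw [hreal, ht]; push_cast; ring
        simp only [star_neg, star_star]
        linear_combination this)
      have c3' : α * star γ + β * star δ = - w' := by
        have := congrArg star c3
        simpa [mul_comm] using this
      refine ⟨γ, δ, -α + k * γ, -β + k * δ, by linear_combination c1, c4, ?_, ?_⟩
      · rw [hk]; linear_combination -c3' + k * c4
      · have c1' := congrArg star c1
        simp only [star_sub, star_mul', star_one] at c1'
        have hq0 : (q : Z) ≠ 0 := by exact_mod_cast hq.ne'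
        apply mul_left_cancel₀ hq0
        rw [← h, hk]
        have hww : w' * star w' + 1 = (q : Z) * t := by rw [hreal, ht]; push_cast; ring
        simp only [star_add, star_mul', star_natCast, star_neg]
        linear_combination q * c2 - hww - q * k * c3 - q * star k * c3' + q * k * star k * c4


lemma norm_quad {a b : Z} {q : ℕ} : a * star a + b * star b = (q : Z) ↔
    a.re * a.re + a.im * a.im + (b.re * b.re + b.im * b.im) = q := by
  constructor
  · intro h
    have := congrArg Zsqrtd.re h
    simp at this
    linarith
  · intro h
    ext
    · simp; linarith
    · simp; ring

lemma card_A_one : Nat.card (A 1) = 8 := by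
  let s : Finset (Z × Z) := {(⟨1,0⟩,0),(⟨-1,0⟩,0),(⟨0,1⟩,0),(⟨0,-1⟩,0),
    (0,⟨1,0⟩),(0,⟨-1,0⟩),(0,⟨0,1⟩),(0,⟨0,-1⟩)}
  have hs : s.card = 8 := by decide
  have : A 1 ≃ s := Equiv.subtypeEquivRight (by
    rintro ⟨⟨a, b⟩, ⟨c, d⟩⟩
    rw [norm_quad]
    constructor
    · rintro ⟨-, h⟩
      simp only [Nat.cast_one] at h
      have ha : -1 ≤ a ∧ a ≤ 1 := by constructor <;> nlinarith
      have hb : -1 ≤ b ∧ b ≤ 1 := by constructor <;> nlinarith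
      have hc : -1 ≤ c ∧ c ≤ 1 := by constructor <;> nlinarith
      have hd : -1 ≤ d ∧ d ≤ 1 := by constructor <;> nlinarith
      obtain ⟨ha1, ha2⟩ := ha
      obtain ⟨hb1, hb2⟩ := hb
      obtain ⟨hc1, hc2⟩ := hc
      obtain ⟨hd1, hd2⟩ := hd
      interval_cases a <;> interval_cases b <;> interval_cases c <;> interval_cases d <;>
        first | (exfalso; omega) | decide
    · intro h
      have h2 : (⟨a, b⟩ : Z) * star ⟨a, b⟩ + (⟨c, d⟩ : Z) * star ⟨c, d⟩ = 1 := by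
        revert h
        simp only [s, Finset.mem_insert, Finset.mem_singleton, Prod.mk.injEq]
        rintro (h | h | h | h | h | h | h | h) <;> rw [h.1, h.2] <;> decide
      refine ⟨⟨star ⟨a, b⟩, star ⟨c, d⟩, by linear_combination h2⟩, ?_⟩
      exact norm_quad.1 (by simpa using h2))
  rw [Nat.card_congr this]; simp [hs]

lemma R_of_coprime {q : ℕ} {α β : Z} (hc : IsCoprime α β)
    (hn : α * star α + β * star β = q) : ∃ w, R q α β w ∧ (q : Z) ∣ w * star w + 1 := by
  obtain ⟨s, t, h⟩ := hc
  have h1 : α * (s * star β - t * star α) - star β = q * (-t) := by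
    linear_combination star β * h - t * hn
  have h2 : β * (s * star β - t * star α) + star α = q * s := by
    linear_combination - star α * h + s * hn
  refine ⟨s * star β - t * star α, ⟨⟨_, h1⟩, ⟨_, h2⟩⟩, ?_⟩
  set w := s * star β - t * star α with hw
  have h1' := congrArg star h1
  have h2' := congrArg star h2
  simp only [star_add, star_sub, star_mul', star_star, star_natCast, star_neg] at h1' h2'
  refine ⟨s * (- t * star w + star s) + t * (s * star w + star t), ?_⟩
  linear_combination - (w * star w + 1) * h + s * star w * h1 + s * h2' + t * star w * h2 - t * h1'

lemma R_unique {q : ℕ} {α β w w' : Z} (hc : IsCoprime α β) (h : R q α β w) (h' : R q α β w') :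
    (q : Z) ∣ w - w' := by
  obtain ⟨s, t, e⟩ := hc
  have := dvd_add ((dvd_sub h.1 h'.1).mul_left s) ((dvd_sub h.2 h'.2).mul_left t)
  convert this using 1
  linear_combination - (w - w') * e

lemma R_congr {q : ℕ} {α β w w' : Z} (h : R q α β w) (hw : (q : Z) ∣ w' - w) : R q α β w' := by
  constructor
  · convert dvd_add h.1 (hw.mul_left α) using 1; ring
  · convert dvd_add h.2 (hw.mul_left β) using 1; ring

lemma coprime_of_R {q : ℕ} (hq : 0 < q) {α β w : Z} (h : R q α β w)
    (hn : α * star α + β * star β = q) : IsCoprime α β := by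
  obtain ⟨⟨γ, h1⟩, ⟨δ, h2⟩⟩ := h
  have hq0 : (q : Z) ≠ 0 := by exact_mod_cast hq.ne'
  refine ⟨δ, -γ, mul_left_cancel₀ hq0 ?_⟩
  linear_combination hn + β * h1 - α * h2

lemma exists_R {q : ℕ} (hq : 0 < q) {w : Z} (hw : (q : Z) ∣ w * star w + 1) :
    ∃ α β, α * star α + β * star β = (q : Z) ∧ R q α β w := by
  have hreal : w * star w + 1 = ((w.re * w.re + w.im * w.im + 1 : ℤ) : Z) := by
    ext <;> simp <;> ring
  have hdiv2 : (q : ℤ) ∣ w.re * w.re + w.im * w.im + 1 := by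
    rw [hreal, natCast_dvd_iff] at hw
    simpa using hw.1
  obtain ⟨t, ht⟩ := hdiv2
  have htpos : 0 ≤ t := by
    have : 0 < (q : ℤ) * t := by
      rw [← ht]; nlinarith [mul_self_nonneg w.re, mul_self_nonneg w.im]
    exact (pos_of_mul_pos_right this (by positivity)).le
  lift t to ℕ using htpos
  obtain ⟨α, β, γ, δ, c1, c2, c3, c4⟩ := exists_rep q t w hq (by rw [hreal, ht]; push_cast; ring)
  refine ⟨α, β, c2, ⟨γ, ?_⟩, ⟨δ, ?_⟩⟩
  · rw [← c3, ← c2]; linear_combination star β * c1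
  · rw [← c3, ← c2]; linear_combination -star α * c1

noncomputable def toW (q : ℕ) (x : A q) : W q :=
  ⟨red q (R_of_coprime x.2.1 x.2.2).choose,
    (red_mem_iff _ _).2 (R_of_coprime x.2.1 x.2.2).choose_spec.2⟩

lemma toW_eq_iff {q : ℕ} (x : A q) (y : W q) (w : Z) (hw : red q w = y.1) :
    toW q x = y ↔ R q x.1.1 x.1.2 w := by
  have hs := (R_of_coprime x.2.1 x.2.2).choose_spec
  rw [Subtype.ext_iff, ← hw]
  simp only [toW]
  rw [red_eq_iff]
  constructor
  · intro h
    exact R_congr hs.1 (by rwa [dvd_sub_comm])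
  · intro h
    exact R_unique x.2.1 hs.1 h

lemma card_A {q : ℕ} (hq : 0 < q) : Nat.card (A q) = Nat.card (W q) * 8 := by
  refine card_fiber (toW q) 8 (by norm_num) fun y => ?_
  obtain ⟨w, hw⟩ := red_surj q y.1
  have hww : (q : Z) ∣ w * star w + 1 := (red_mem_iff _ _).1 (by rw [hw]; exact y.2)
  obtain ⟨α, β, hn, hR⟩ := exists_R hq hww
  have hq0 : (q : Z) ≠ 0 := by exact_mod_cast hq.ne'
  rw [← card_A_one]
  symm
  have key : ∀ x : A 1, R q (x.1.1 * α + x.1.2 * β) (- star x.1.2 * α + star x.1.1 * β) w ∧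
      (x.1.1 * α + x.1.2 * β) * star (x.1.1 * α + x.1.2 * β) +
      (- star x.1.2 * α + star x.1.1 * β) * star (- star x.1.2 * α + star x.1.1 * β) = q := by
    rintro ⟨⟨a, b⟩, -, h⟩
    simp only [Nat.cast_one] at h
    simp only
    refine ⟨⟨?_, ?_⟩, ?_⟩
    · convert dvd_add (hR.1.mul_left a) (hR.2.mul_left b) using 1
      simp only [star_add, star_mul', star_star, star_neg]
      ring
    · convert dvd_add (hR.1.mul_left (-star b)) (hR.2.mul_left (star a)) using 1
      simp only [star_add, star_mul']
      ring
    · simp only [star_add, star_mul', star_star, star_neg]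
      linear_combination (α * star α + β * star β) * h + hn
  refine Nat.card_congr (Equiv.ofBijective (fun x => ⟨⟨(x.1.1 * α + x.1.2 * β,
      - star x.1.2 * α + star x.1.1 * β), coprime_of_R hq (key x).1 (key x).2, (key x).2⟩,
      (toW_eq_iff _ y w hw).2 (key x).1⟩) ⟨?_, ?_⟩)
  · rintro ⟨⟨a, b⟩, h⟩ ⟨⟨a', b'⟩, h'⟩ e
    simp only [Subtype.mk.injEq, Prod.mk.injEq] at e
    obtain ⟨e1, e2⟩ := e
    have e2' := congrArg star e2
    simp only [star_add, star_mul', star_star, star_neg] at e2'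
    have ha : a = a' := by
      apply mul_left_cancel₀ hq0
      linear_combination star α * e1 + β * e2' - (a - a') * hn
    have hb : b = b' := by
      apply mul_left_cancel₀ hq0
      linear_combination star β * e1 - α * e2' - (b - b') * hn
    subst ha hb; rfl
  · rintro ⟨⟨⟨α', β'⟩, hc, hn'⟩, hy⟩
    rw [toW_eq_iff _ y w hw] at hy
    simp only at hy hc hn'
    obtain ⟨a, ha⟩ : (q : Z) ∣ α' * star α + star β' * β := by
      convert dvd_sub (hR.2.mul_left α') (hy.1.mul_left β) using 1; ring
    obtain ⟨b, hb⟩ : (q : Z) ∣ α' * star β - α * star β' := by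
      convert dvd_sub (hy.1.mul_left α) (hR.1.mul_left α') using 1; ring
    have ha' := congrArg star ha
    have hb' := congrArg star hb
    simp only [star_add, star_sub, star_mul', star_star, star_natCast] at ha' hb'
    have e1 : a * α + b * β = α' := by
      apply mul_left_cancel₀ hq0
      linear_combination - α * ha - β * hb + α' * hn
    have e2 : - star b * α + star a * β = β' := by
      apply mul_left_cancel₀ hq0
      linear_combination α * hb' - β * ha' + β' * hn
    have e3 : a * star a + b * star b = 1 := by
      apply mul_left_cancel₀ hq0
      apply mul_left_cancel₀ hq0
      have : ((q : Z) * a) * (q * star a) + (q * b) * (q * star b) = q * q := by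
        rw [← ha, ← ha', ← hb, ← hb']
        linear_combination (α * star α + β * star β) * hn' + q * hn
      linear_combination this
    refine ⟨⟨(a, b), ⟨star a, star b, by linear_combination e3⟩, by simpa using e3⟩, ?_⟩
    apply Subtype.ext
    apply Subtype.ext
    simp only [e1, e2]

end RPS
open Finset

namespace RPS
local notation "Z" => GaussianInt

abbrev U : Type := {e : Z // e * star e = 1}

lemma card_U : Nat.card U = 4 := by
  let s : Finset Z := {⟨1,0⟩,⟨-1,0⟩,⟨0,1⟩,⟨0,-1⟩}
  have hs : s.card = 4 := by decide
  have : U ≃ s := Equiv.subtypeEquivRight (by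
    rintro ⟨a, b⟩
    constructor
    · intro h
      have h := congrArg Zsqrtd.re h
      simp at h
      have ha : -1 ≤ a ∧ a ≤ 1 := by constructor <;> nlinarith
      have hb : -1 ≤ b ∧ b ≤ 1 := by constructor <;> nlinarith
      obtain ⟨ha1, ha2⟩ := ha
      obtain ⟨hb1, hb2⟩ := hb
      interval_cases a <;> interval_cases b <;>
        first | (exfalso; omega) | decide
    · intro h
      revert h
      simp only [s, Finset.mem_insert, Finset.mem_singleton]
      rintro (h | h | h | h) <;> rw [h] <;> decide)
  rw [Nat.card_congr this]; simp [hs]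

lemma exists_ab {u v : ℕ} {z : Z} (h : z * star z = (u : Z) * v)
    (hp : ∀ d : ℤ, (d : Z) ∣ z → d ∣ u → d ∣ v → IsUnit d) :
    ∃ α β : Z, IsCoprime α β ∧ α * star α = u ∧ β * star β = v ∧ α * star β = z := by
  rcases Nat.eq_zero_or_pos u with hu | hu
  · subst hu
    have hz : z = 0 := by
      have h0 : z * star z = 0 := by simpa using h
      rcases mul_eq_zero.1 h0 with h0 | h0
      · exact h0
      · simpa using h0
    subst hz
    have hv : v = 1 := by
      have := hp v (dvd_zero _) (dvd_zero _) dvd_rfl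
      rw [Int.isUnit_iff] at this
      omega
    subst hv
    exact ⟨0, 1, isCoprime_one_right, by simp, by simp, by simp⟩
  · have hu0 : (u : Z) ≠ 0 := by exact_mod_cast hu.ne'
    obtain ⟨g, s, t, x, y, e1, e2, e3⟩ : ∃ g s t x y : Z, (u : Z) = g * s ∧ z = g * t ∧
        g = u * x + z * y := by
      obtain ⟨s, hs⟩ := EuclideanDomain.gcd_dvd_left (u : Z) z
      obtain ⟨t, ht⟩ := EuclideanDomain.gcd_dvd_right (u : Z) z
      exact ⟨_, s, t, _, _, hs, ht, EuclideanDomain.gcd_eq_gcd_ab _ _⟩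
    have hg0 : g ≠ 0 := by rintro rfl; simp at e1; exact hu.ne' e1
    have hs0 : s ≠ 0 := by rintro rfl; simp at e1; exact hu.ne' e1
    have hc : s * x + t * y = 1 := by
      apply mul_left_cancel₀ hg0
      linear_combination -e3 - x * e1 - y * e2
    have hsv : s * v = t * star z := by
      apply mul_left_cancel₀ hg0
      linear_combination - v * e1 - h + star z * e2
    have hsz : star z = s * (x * star z + y * v) := by
      linear_combination - star z * hc - y * hsv
    have e3' := congrArg star e3
    have e2' := congrArg star e2
    simp only [star_add, star_mul', star_natCast] at e3' e2'
    obtain ⟨k, hk⟩ : ∃ k, star g = s * k :=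
      ⟨g * star x + (x * star z + y * v) * star y, by
        linear_combination e3' + star x * e1 + star y * hsz⟩
    have hgk : g * star g = u * k := by rw [hk, e1]; ring
    have hkr : star k = k := by
      apply mul_left_cancel₀ hu0
      have := congrArg star hgk
      simp only [star_mul', star_star, star_natCast] at this
      linear_combination -this + hgk
    have hki : k = ((k.re : ℤ) : Z) := by
      have := congrArg Zsqrtd.im hkr
      simp at this
      ext
      · simp
      · simp; omega
    have hvk : (v : Z) = k * (t * star t) := by
      apply mul_left_cancel₀ hs0
      linear_combination hsv + t * e2' + t * star t * hk
    have hkg : k ∣ g := by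
      have hk' := congrArg star hk
      simp only [star_mul', star_star, hkr] at hk'
      exact ⟨star s, by linear_combination hk'⟩
    have hun : IsUnit k.re := by
      apply hp
      · rw [← hki, e2]; exact hkg.mul_right _
      · have : k ∣ (u : Z) := by rw [e1]; exact hkg.mul_right _
        rw [hki] at this
        have h2 : ((k.re : ℤ) : Z) ∣ ((u : ℤ) : Z) := by simpa using this
        rwa [Zsqrtd.intCast_dvd_intCast] at h2
      · have : k ∣ (v : Z) := ⟨_, hvk⟩
        rw [hki] at this
        have h2 : ((k.re : ℤ) : Z) ∣ ((v : ℤ) : Z) := by simpa using this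
        rwa [Zsqrtd.intCast_dvd_intCast] at h2
    have hk1 : k = 1 := by
      rw [Int.isUnit_iff] at hun
      rcases hun with hun | hun
      · rw [hki, hun]; simp
      · exfalso
        have := congrArg Zsqrtd.re hgk
        simp [hun] at this
        have hu' : (0 : ℤ) < u := by exact_mod_cast hu
        nlinarith [mul_self_nonneg g.re, mul_self_nonneg g.im]
    subst hk1
    rw [mul_one] at hk hgk
    have hc' := congrArg star hc
    have hk' := congrArg star hk
    simp only [star_add, star_mul', star_one, star_star] at hc' hk'
    refine ⟨g, star t, ⟨star x, star y, ?_⟩, hgk, ?_, ?_⟩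
    · linear_combination hc' + star x * hk'
    · rw [hvk]; simp [mul_comm]
    · simp [e2]

abbrev P (q : ℕ) : Type := {x : Fin 3 → ℤ // (∑ i, x i ^ 2 = (q : ℤ) ^ 2) ∧
  ∀ d : ℤ, (∀ i, d ∣ x i) → d ∣ q → IsUnit d}

abbrev Pc (q : ℕ) (i : Fin 3) : Type := {x : P q // Odd (x.1 i)}

lemma toPc_aux {q : ℕ} (hq : Odd q) {α β : Z} (hc : IsCoprime α β)
    (hn : α * star α + β * star β = (q : Z)) :
    (∑ i, (![2 * (α * star β).re, 2 * (α * star β).im, (α * star α).re - (β * star β).re] i) ^ 2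
      = (q : ℤ) ^ 2) ∧
    (∀ d : ℤ, (∀ i, d ∣ ![2 * (α * star β).re, 2 * (α * star β).im,
      (α * star α).re - (β * star β).re] i) → d ∣ q → IsUnit d) ∧
    Odd ((α * star α).re - (β * star β).re) := by
  have hn' := norm_quad.1 hn
  have hn2 : (α * star α).re + (β * star β).re = q := by simp; linarith
  refine ⟨?_, ?_, ?_⟩
  · rw [Fin.sum_univ_three, ← hn2]
    simp
    ring
  · intro d hd hdq
    have h0 : d ∣ 2 * (α * star β).re := hd 0
    have h1 : d ∣ 2 * (α * star β).im := hd 1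
    have h2 : d ∣ (α * star α).re - (β * star β).re := hd 2
    have hcop : IsCoprime d 2 := by
      have h3 : IsCoprime (q : ℤ) 2 := by
        obtain ⟨k, hk⟩ := hq
        exact ⟨1, -k, by subst hk; push_cast; ring⟩
      obtain ⟨e, he⟩ := hdq
      rw [he] at h3
      exact h3.of_mul_left_left
    have h0' := hcop.dvd_of_dvd_mul_left h0
    have h1' := hcop.dvd_of_dvd_mul_left h1
    have hu : d ∣ (α * star α).re := by
      apply hcop.dvd_of_dvd_mul_left
      have := dvd_add hdq h2
      rw [← hn2] at this
      have e : ∀ a b : ℤ, a + b + (a - b) = 2 * a := fun a b => by ring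
      rwa [e] at this
    have hv : d ∣ (β * star β).re := by
      have := dvd_sub hdq hu
      rw [← hn2] at this
      have e : ∀ a b : ℤ, a + b - a = b := fun a b => by ring
      rwa [e] at this
    have hz : (d : Z) ∣ α * star β := (Zsqrtd.intCast_dvd _ _).2 ⟨h0', h1'⟩
    have hU : (d : Z) ∣ α * star α := (Zsqrtd.intCast_dvd _ _).2 ⟨hu, by
      have : (α * star α).im = 0 := by simp; ring
      rw [this]; exact dvd_zero _⟩
    have hV : (d : Z) ∣ β * star β := (Zsqrtd.intCast_dvd _ _).2 ⟨hv, by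
      have : (β * star β).im = 0 := by simp; ring
      rw [this]; exact dvd_zero _⟩
    have hz' : (d : Z) ∣ β * star α := by
      obtain ⟨k, hk⟩ := hz
      refine ⟨star k, ?_⟩
      have := congrArg star hk
      simp only [star_mul', star_star, star_intCast] at this
      linear_combination this
    obtain ⟨x, y, hxy⟩ := hc
    have hxy' := congrArg star hxy
    simp only [star_add, star_mul', star_one] at hxy'
    have ha : (d : Z) ∣ α := by
      convert dvd_add (hU.mul_left (star x)) (hz.mul_left (star y)) using 1
      linear_combination - α * hxy'
    have hb : (d : Z) ∣ β := by
      convert dvd_add (hz'.mul_left (star x)) (hV.mul_left (star y)) using 1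
      linear_combination - β * hxy'
    have h1 : (d : Z) ∣ 1 := by
      rw [← hxy]; exact dvd_add (ha.mul_left x) (hb.mul_left y)
    have h1 : (d : Z) ∣ ((1 : ℤ) : Z) := by simpa using h1
    rw [Zsqrtd.intCast_dvd_intCast] at h1
    exact isUnit_of_dvd_one h1
  · obtain ⟨k, hk⟩ := hq
    refine ⟨k - (β * star β).re, ?_⟩
    rw [hk] at hn2
    push_cast at hn2
    linarith

def toPc {q : ℕ} (hq : Odd q) (x : A q) : Pc q 2 :=
  ⟨⟨![2 * (x.1.1 * star x.1.2).re, 2 * (x.1.1 * star x.1.2).im,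
      (x.1.1 * star x.1.1).re - (x.1.2 * star x.1.2).re],
    (toPc_aux hq x.2.1 x.2.2).1, (toPc_aux hq x.2.1 x.2.2).2.1⟩, (toPc_aux hq x.2.1 x.2.2).2.2⟩

lemma exists_of_Pc {q : ℕ} (hq : Odd q) (y : Pc q 2) : ∃ x : A q, toPc hq x = y := by
  obtain ⟨⟨x, h, hp⟩, hodd⟩ := y
  simp only at hodd
  rw [Fin.sum_univ_three] at h
  have hcq : |x 2| ≤ q := by
    apply abs_le_of_sq_le_sq _ (by positivity)
    nlinarith [sq_nonneg (x 0), sq_nonneg (x 1)]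
  rw [abs_le] at hcq
  obtain ⟨k, hk⟩ := hodd
  obtain ⟨l, hl⟩ := hq
  have hlz : (q : ℤ) = 2 * l + 1 := by exact_mod_cast hl
  obtain ⟨a, ha⟩ : (2 : ℤ) ∣ x 0 ∧ (2 : ℤ) ∣ x 1 := by
    have hmod : x 0 ^ 2 + x 1 ^ 2 = 4 * (l ^ 2 + l - k ^ 2 - k) := by
      rw [hk, hlz] at h; linear_combination h
    rcases Int.even_or_odd' (x 0) with ⟨a, ha | ha⟩ <;>
    rcases Int.even_or_odd' (x 1) with ⟨b, hb | hb⟩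
    · exact ⟨⟨a, ha⟩, ⟨b, hb⟩⟩
    · exfalso
      rw [ha, hb] at hmod
      ring_nf at hmod; omega
    · exfalso
      rw [ha, hb] at hmod
      ring_nf at hmod; omega
    · exfalso
      rw [ha, hb] at hmod
      ring_nf at hmod; omega
  obtain ⟨a, ha0⟩ := a
  obtain ⟨b, hb0⟩ := ha
  obtain ⟨u, hu⟩ : ∃ u : ℕ, (u : ℤ) = l + k + 1 := ⟨(l + k + 1).toNat, by omega⟩
  obtain ⟨v, hv⟩ : ∃ v : ℕ, (v : ℤ) = l - k := ⟨(l - k : ℤ).toNat, by omega⟩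
  have hz : (⟨a, b⟩ : Z) * star ⟨a, b⟩ = (u : Z) * v := by
    have e : (⟨a, b⟩ : Z) * star ⟨a, b⟩ = ((a * a + b * b : ℤ) : Z) := by
      ext
      · simp
      · simp; ring
    have e2 : a * a + b * b = u * v := by
      rw [hu, hv]
      rw [ha0, hb0, hk, hlz] at h
      linarith
    rw [e, e2]; push_cast; rfl
  obtain ⟨α, β, hc, h1, h2, h3⟩ := exists_ab hz (by
    intro d hd hdu hdv
    have hd' := (Zsqrtd.intCast_dvd _ _).1 hd
    apply hp
    · intro i
      fin_cases i
      · simp only [Fin.zero_eta, ha0]; exact hd'.1.mul_left _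
      · simp only [Fin.mk_one, hb0]; exact hd'.2.mul_left _
      · simp only [Fin.reduceFinMk]
        have e : x 2 = (u : ℤ) - v := by rw [hu, hv, hk]; ring
        rw [e]; exact dvd_sub hdu hdv
    · have e : (q : ℤ) = (u : ℤ) + v := by rw [hu, hv, hlz]; ring
      rw [e]; exact dvd_add hdu hdv)
  refine ⟨⟨(α, β), hc, ?_⟩, ?_⟩
  · simp only [h1, h2]
    have : u + v = q := by omega
    rw [← this]; push_cast; rfl
  · apply Subtype.ext
    apply Subtype.ext
    simp only [toPc, h1, h2, h3]
    funext i
    fin_cases i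
    · simp [ha0]
    · simp [hb0]
    · simp; omega

lemma toPc_eq_iff {q : ℕ} (hq : Odd q) (x y : A q) : toPc hq x = toPc hq y ↔
    ∃ e : U, y.1.1 = e.1 * x.1.1 ∧ y.1.2 = e.1 * x.1.2 := by
  obtain ⟨⟨α, β⟩, hc, hn⟩ := x
  obtain ⟨⟨α', β'⟩, hc', hn'⟩ := y
  simp only at hc hn hc' hn'
  have hq0 : (q : Z) ≠ 0 := by exact_mod_cast hq.pos.ne'
  constructor
  · intro h
    have h := congrArg (fun z => z.1.1) h
    simp only [toPc] at h
    have h0 := congrFun h 0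
    have h1 := congrFun h 1
    have h2 := congrFun h 2
    simp only [Matrix.cons_val] at h0 h1 h2
    have hz : α * star β = α' * star β' := by
      ext
      · linarith
      · linarith
    have q1 := congrArg Zsqrtd.re hn
    have q2 := congrArg Zsqrtd.re hn'
    rw [Zsqrtd.re_add] at q1 q2
    have hA : α * star α = α' * star α' := by
      ext
      · linarith
      · simp; ring
    have hB : β * star β = β' * star β' := by
      ext
      · linarith
      · simp; ring
    have hz' := congrArg star hz
    simp only [star_mul', star_star] at hz'
    have hx : β' * α = α' * β := by
      apply mul_left_cancel₀ hq0
      linear_combination - (β' * α - α' * β) * hn + β * β' * hz - α' * β * hB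
        + α * β' * hA - α * α' * hz'
    obtain ⟨s, t, hst⟩ := hc
    have e1 : α' = (s * α' + t * β') * α := by
      linear_combination - α' * hst - t * hx
    have e2 : β' = (s * α' + t * β') * β := by
      linear_combination - β' * hst + s * hx
    have e1' := congrArg star e1
    have e2' := congrArg star e2
    rw [star_mul'] at e1' e2'
    refine ⟨⟨s * α' + t * β', ?_⟩, e1, e2⟩
    apply mul_left_cancel₀ hq0
    set e := s * α' + t * β'
    rw [← hn]
    have : α' * star α' + β' * star β' = α * star α + β * star β := by rw [hA, hB]
    rw [e1', e2'] at this
    nth_rewrite 1 [e1] at this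
    nth_rewrite 1 [e2] at this
    linear_combination this
  · rintro ⟨⟨e, he⟩, h1, h2⟩
    simp only at h1 h2
    have k1 : α' * star α' = α * star α := by
      rw [h1, star_mul']; linear_combination α * star α * he
    have k2 : β' * star β' = β * star β := by
      rw [h2, star_mul']; linear_combination β * star β * he
    have k3 : α' * star β' = α * star β := by
      rw [h1, h2, star_mul']; linear_combination α * star β * he
    apply Subtype.ext
    apply Subtype.ext
    simp only [toPc, k1, k2, k3]

lemma card_A_Pc {q : ℕ} (hq : Odd q) : Nat.card (A q) = Nat.card (Pc q 2) * 4 := by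
  refine card_fiber (toPc hq) 4 (by norm_num) fun y => ?_
  obtain ⟨x, hx⟩ := exists_of_Pc hq y
  subst hx
  rw [← card_U]
  symm
  have key : ∀ e : U, IsCoprime (e.1 * x.1.1) (e.1 * x.1.2) ∧
      (e.1 * x.1.1) * star (e.1 * x.1.1) + (e.1 * x.1.2) * star (e.1 * x.1.2) = (q : Z) := by
    rintro ⟨e, he⟩
    have h2 := x.2.2
    obtain ⟨s, t, h⟩ := x.2.1
    refine ⟨⟨star e * s, star e * t, ?_⟩, ?_⟩
    · simp only; linear_combination (e * star e) * h + he
    · simp only [star_mul']; linear_combination (e * star e) * h2 + q * he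
  refine Nat.card_congr (Equiv.ofBijective (fun e => ⟨⟨(e.1 * x.1.1, e.1 * x.1.2), key e⟩,
    ((toPc_eq_iff hq x ⟨(e.1 * x.1.1, e.1 * x.1.2), key e⟩).2 ⟨e, rfl, rfl⟩).symm⟩) ⟨?_, ?_⟩)
  · rintro ⟨e, he⟩ ⟨e', he'⟩ h
    simp only [Subtype.mk.injEq, Prod.mk.injEq] at h
    obtain ⟨s, t, hst⟩ := x.2.1
    apply Subtype.ext
    simp only
    linear_combination s * h.1 + t * h.2 - (e - e') * hst
  · rintro ⟨y, hy⟩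
    obtain ⟨e, h1, h2⟩ := (toPc_eq_iff hq x y).1 hy.symm
    refine ⟨e, ?_⟩
    apply Subtype.ext
    apply Subtype.ext
    exact Prod.ext h1.symm h2.symm

lemma card_Pc (q : ℕ) (i : Fin 3) : Nat.card (Pc q i) = Nat.card (Pc q 2) := by
  have key : ∀ x : P q, (∑ j, x.1 (Equiv.swap i 2 j) ^ 2 = (q : ℤ) ^ 2) ∧
      ∀ d : ℤ, (∀ j, d ∣ x.1 (Equiv.swap i 2 j)) → d ∣ q → IsUnit d := by
    rintro ⟨x, h1, h2⟩
    refine ⟨?_, ?_⟩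
    · exact (Equiv.sum_comp (Equiv.swap i 2) (fun j => x j ^ 2)).trans h1
    · intro d hd hq
      refine h2 d (fun j => ?_) hq
      have := hd (Equiv.swap i 2 j)
      simpa using this
  refine Nat.card_congr ⟨fun x => ⟨⟨fun j => x.1.1 (Equiv.swap i 2 j), key x.1⟩, ?_⟩,
    fun x => ⟨⟨fun j => x.1.1 (Equiv.swap i 2 j), key x.1⟩, ?_⟩, ?_, ?_⟩
  · simpa using x.2
  · simpa using x.2
  · intro x; apply Subtype.ext; apply Subtype.ext; funext j; simp
  · intro x; apply Subtype.ext; apply Subtype.ext; funext j; simp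

lemma P_parity {q : ℕ} (x : P q) : ∃ i, Odd (x.1 i) ∧ ∀ j, Odd (x.1 j) → j = i := by
  obtain ⟨x, h, hp⟩ := x
  rw [Fin.sum_univ_three] at h
  have hne : ¬ (Even (x 0) ∧ Even (x 1) ∧ Even (x 2)) := by
    rintro ⟨h0, h1, h2⟩
    have hq : Even (q : ℤ) := by
      have : Even ((q : ℤ) ^ 2) := by
        rw [← h]
        exact ((h0.pow_of_ne_zero two_ne_zero).add (h1.pow_of_ne_zero two_ne_zero)).add
          (h2.pow_of_ne_zero two_ne_zero)
      exact (Int.even_pow.1 this).1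
    have := hp 2 (by
      intro i
      fin_cases i
      · exact h0.two_dvd
      · exact h1.two_dvd
      · exact h2.two_dvd) hq.two_dvd
    rw [Int.isUnit_iff] at this
    omega
  have hq4 : ((q : ℤ) ^ 2) % 4 = 0 ∨ ((q : ℤ) ^ 2) % 4 = 1 := by
    rcases Int.even_or_odd' (q : ℤ) with ⟨a, ha | ha⟩ <;> rw [ha] <;> ring_nf <;> omega
  rw [← h] at hq4
  simp only
  rcases Int.even_or_odd' (x 0) with ⟨a, ha | ha⟩ <;>
  rcases Int.even_or_odd' (x 1) with ⟨b, hb | hb⟩ <;>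
  rcases Int.even_or_odd' (x 2) with ⟨c, hc | hc⟩ 
  · exact absurd ⟨⟨a, by omega⟩, ⟨b, by omega⟩, ⟨c, by omega⟩⟩ hne
  · refine ⟨2, ⟨c, hc⟩, fun j hj => ?_⟩
    fin_cases j
    · exact absurd hj (by simp [ha])
    · exact absurd hj (by simp [hb])
    · rfl
  · refine ⟨1, ⟨b, hb⟩, fun j hj => ?_⟩
    fin_cases j
    · exact absurd hj (by simp [ha])
    · rfl
    · exact absurd hj (by simp [hc])
  · exfalso; rw [ha, hb, hc] at hq4; ring_nf at hq4; omega
  · refine ⟨0, ⟨a, ha⟩, fun j hj => ?_⟩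
    fin_cases j
    · rfl
    · exact absurd hj (by simp [hb])
    · exact absurd hj (by simp [hc])
  · exfalso; rw [ha, hb, hc] at hq4; ring_nf at hq4; omega
  · exfalso; rw [ha, hb, hc] at hq4; ring_nf at hq4; omega
  · exfalso; rw [ha, hb, hc] at hq4; ring_nf at hq4; omega

lemma card_P_Pc {q : ℕ} (hq : 0 < Nat.card (Pc q 2)) : Nat.card (P q) = 3 * Nat.card (Pc q 2) := by
  have := card_fiber (fun x : P q => (P_parity x).choose) (Nat.card (Pc q 2)) hq.ne' (fun i => by
    rw [← card_Pc q i]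
    refine Nat.card_congr (Equiv.subtypeEquivRight fun x => ?_)
    have hs := (P_parity x).choose_spec
    constructor
    · rintro rfl; exact hs.1
    · intro h; exact (hs.2 i h).symm)
  rw [this]; simp

lemma P_even {q : ℕ} (hq : Even q) : Nat.card (P q) = 0 := by
  have : IsEmpty (P q) := by
    constructor
    intro x
    obtain ⟨i, hi, hu⟩ := P_parity x
    have h := x.2.1
    rw [Fin.sum_univ_three] at h
    have : Odd (x.1 0 ^ 2 + x.1 1 ^ 2 + x.1 2 ^ 2) := by
      have hev : ∀ j, j ≠ i → Even (x.1 j) := fun j hj => by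
        rw [← Int.not_odd_iff_even]; exact fun h => hj (hu j h)
      fin_cases i
      · have h1 := hev 1 (by simp)
        have h2 := hev 2 (by simp)
        simp at hi h1 h2
        exact ((hi.pow).add_even (h1.pow_of_ne_zero two_ne_zero)).add_even (h2.pow_of_ne_zero two_ne_zero)
      · have h1 := hev 0 (by simp)
        have h2 := hev 2 (by simp)
        simp at hi h1 h2
        exact ((h1.pow_of_ne_zero two_ne_zero).add_odd hi.pow).add_even (h2.pow_of_ne_zero two_ne_zero)
      · have h1 := hev 0 (by simp)
        have h2 := hev 1 (by simp)
        simp at hi h1 h2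
        exact ((h1.pow_of_ne_zero two_ne_zero).add (h2.pow_of_ne_zero two_ne_zero)).add_odd hi.pow
    rw [h] at this
    have h2 : Even ((q : ℤ) ^ 2) := by
      have : Even (q : ℤ) := by exact_mod_cast hq
      exact this.pow_of_ne_zero two_ne_zero
    exact (Int.not_odd_iff_even.2 h2) this
  simp

end RPS
open Finset

namespace RPS

abbrev Wr (R : Type) [CommRing R] : Type := {w : R × R // w.1 ^ 2 + w.2 ^ 2 = -1}

lemma card_Wr_congr {R S : Type} [CommRing R] [CommRing S] (e : R ≃+* S) :
    Nat.card (Wr R) = Nat.card (Wr S) := by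
  refine Nat.card_congr ((Equiv.prodCongr e.toEquiv e.toEquiv).subtypeEquiv ?_)
  rintro ⟨a, b⟩
  simp only [Equiv.prodCongr_apply, Prod.map, RingEquiv.toEquiv_eq_coe, RingEquiv.coe_toEquiv]
  rw [← map_pow, ← map_pow, ← map_add, ← map_one e, ← map_neg, e.injective.eq_iff]

lemma card_Wr_prod {R S : Type} [CommRing R] [CommRing S] :
    Nat.card (Wr (R × S)) = Nat.card (Wr R) * Nat.card (Wr S) := by
  rw [← Nat.card_prod]
  refine Nat.card_congr ⟨fun w => (⟨(w.1.1.1, w.1.2.1), ?_⟩, ⟨(w.1.1.2, w.1.2.2), ?_⟩),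
    fun w => ⟨((w.1.1.1, w.2.1.1), (w.1.1.2, w.2.1.2)), ?_⟩, ?_, ?_⟩
  · exact congrArg Prod.fst w.2
  · exact congrArg Prod.snd w.2
  · exact Prod.ext w.1.2 w.2.2
  · intro w; rfl
  · intro w; rfl

lemma card_W_mul {m n : ℕ} (h : m.Coprime n) :
    Nat.card (W (m * n)) = Nat.card (W m) * Nat.card (W n) :=
  (card_Wr_congr (ZMod.chineseRemainder h)).trans card_Wr_prod

def mapW {R S : Type} [CommRing R] [CommRing S] (f : R →+* S) (w : Wr R) : Wr S :=
  ⟨(f w.1.1, f w.1.2), by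
    have := congrArg f w.2
    simpa using this⟩

lemma card_fib_aux {R S : Type} [CommRing R] [CommRing S] (f : R →+* S)
    (hf : Function.Surjective f) (hk : ∀ a, f a = 0 → a * a = 0) (hl : ∀ a, IsUnit (f a) → IsUnit a)
    (h2 : IsUnit (2 : R)) (y : Wr S) (hy : IsUnit y.1.1) :
    Nat.card {x // mapW f x = y} = Nat.card {a : R // f a = 0} := by
  obtain ⟨⟨s, t⟩, hst⟩ := y
  simp only at hst hy
  obtain ⟨x0, rfl⟩ := hf s
  obtain ⟨y0, rfl⟩ := hf t
  have hu : IsUnit (2 * x0) := h2.mul (hl _ hy)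
  obtain ⟨u, hu'⟩ := hu.exists_right_inv
  have hek : ∀ k : R, f k = 0 → f (x0 ^ 2 + (y0 + k) ^ 2 + 1) = 0 := by
    intro k hk0
    simp only [map_add, map_pow, hk0, map_one, add_zero]
    linear_combination hst
  symm
  refine Nat.card_congr (Equiv.ofBijective (fun k => ⟨⟨(x0 - (x0 ^ 2 + (y0 + k.1) ^ 2 + 1) * u,
      y0 + k.1), ?_⟩, ?_⟩) ⟨?_, ?_⟩)
  · have h0 := hk _ (hek k.1 k.2)
    simp only
    set e := x0 ^ 2 + (y0 + k.1) ^ 2 + 1 with he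
    linear_combination -e * hu' + u ^ 2 * h0 - he
  · apply Subtype.ext
    simp only [mapW]
    rw [map_sub, map_mul, hek k.1 k.2, map_add, k.2]
    simp
  · rintro ⟨k, hk1⟩ ⟨k', hk2⟩ h
    simp only [Subtype.mk.injEq, Prod.mk.injEq] at h
    apply Subtype.ext
    exact add_left_cancel h.2
  · rintro ⟨⟨⟨a, b⟩, hab⟩, h⟩
    simp only [mapW, Subtype.mk.injEq, Prod.mk.injEq] at h hab
    have hb0 : f (b - y0) = 0 := by rw [map_sub, h.2, sub_self]
    refine ⟨⟨b - y0, hb0⟩, ?_⟩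
    apply Subtype.ext
    apply Subtype.ext
    simp only [add_sub_cancel]
    have h0 := hk _ (hek _ hb0)
    rw [add_sub_cancel] at h0
    refine Prod.ext ?_ rfl
    simp only
    have hun : IsUnit (x0 - (x0 ^ 2 + b ^ 2 + 1) * u + a) := by
      apply hl
      have := hek _ hb0
      rw [add_sub_cancel] at this
      rw [map_add, map_sub, map_mul, this, h.1]
      have e : f x0 - 0 * f u + f x0 = f (2 * x0) := by rw [map_mul, map_ofNat]; ring
      rw [e]; exact hu.map f
    rw [← sub_eq_zero]
    apply hun.mul_right_cancel
    rw [zero_mul]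
    set e := x0 ^ 2 + b ^ 2 + 1 with he
    linear_combination -e * hu' + u ^ 2 * h0 - he - hab

def swapW {R : Type} [CommRing R] : Wr R ≃ Wr R :=
  ⟨fun w => ⟨(w.1.2, w.1.1), by have := w.2; simp only; rwa [add_comm]⟩,
   fun w => ⟨(w.1.2, w.1.1), by have := w.2; simp only; rwa [add_comm]⟩, fun _ => rfl, fun _ => rfl⟩

lemma card_fib {R S : Type} [CommRing R] [CommRing S] (f : R →+* S)
    (hf : Function.Surjective f) (hk : ∀ a, f a = 0 → a * a = 0) (hl : ∀ a, IsUnit (f a) → IsUnit a)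
    (h2 : IsUnit (2 : R)) (y : Wr S) (hy : IsUnit y.1.1 ∨ IsUnit y.1.2) :
    Nat.card {x // mapW f x = y} = Nat.card {a : R // f a = 0} := by
  rcases hy with hy | hy
  · exact card_fib_aux f hf hk hl h2 y hy
  · rw [← card_fib_aux f hf hk hl h2 (swapW y) hy]
    refine Nat.card_congr (swapW.subtypeEquiv fun x => ?_)
    rw [← swapW.injective.eq_iff]; rfl

lemma isUnit_zmod_pow {p k : ℕ} (hp : p.Prime) (hk : k ≠ 0) (a : ℤ) :
    IsUnit (a : ZMod (p ^ k)) ↔ ¬ (p : ℤ) ∣ a := by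
  rw [ZMod.coe_int_isUnit_iff_isCoprime]
  push_cast
  rw [IsCoprime.pow_left_iff (Nat.pos_of_ne_zero hk),
    Prime.coprime_iff_not_dvd (Nat.prime_iff_prime_int.1 hp)]

lemma card_W_pow_succ {p k : ℕ} (hp : p.Prime) (hp2 : p ≠ 2) (hk : k ≠ 0) :
    Nat.card (W (p ^ (k + 1))) = Nat.card (W (p ^ k)) * p := by
  have : NeZero p := ⟨hp.ne_zero⟩
  have hdvd : p ^ k ∣ p ^ (k + 1) := pow_dvd_pow _ (Nat.le_succ k)
  let f : ZMod (p ^ (k + 1)) →+* ZMod (p ^ k) := ZMod.castHom hdvd _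
  have hf : Function.Surjective f := ZMod.castHom_surjective hdvd
  have hker : Nat.card {a // f a = 0} = p := by
    have h1 := AddSubgroup.card_mul_index f.toAddMonoidHom.ker
    rw [AddSubgroup.index_ker, AddMonoidHom.range_eq_top.2 hf, AddSubgroup.card_top,
      Nat.card_zmod, Nat.card_zmod] at h1
    exact Nat.eq_of_mul_eq_mul_right (pow_pos hp.pos k) (h1.trans (pow_succ' p k))
  refine card_fiber (mapW f) p hp.ne_zero fun y => ?_
  refine Eq.trans ?_ hker
  have hnd : ∀ a : ℤ, f a = 0 ↔ ((p ^ k : ℕ) : ℤ) ∣ a := fun a => by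
    rw [map_intCast, ZMod.intCast_zmod_eq_zero_iff_dvd]
  apply card_fib f hf
  · intro a ha
    obtain ⟨a, rfl⟩ := ZMod.intCast_surjective a
    rw [hnd] at ha
    rw [← Int.cast_mul, ZMod.intCast_zmod_eq_zero_iff_dvd]
    have := mul_dvd_mul ha ha
    refine dvd_trans ?_ this
    push_cast
    rw [← pow_add]
    exact pow_dvd_pow _ (by omega)
  · intro a ha
    obtain ⟨a, rfl⟩ := ZMod.intCast_surjective a
    rw [map_intCast, isUnit_zmod_pow hp hk] at ha
    rwa [isUnit_zmod_pow hp (by omega)]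
  · have := (isUnit_zmod_pow hp (Nat.succ_ne_zero k) 2).2 (by
      intro h
      have h : p ∣ 2 := by exact_mod_cast h
      exact hp2 ((Nat.prime_dvd_prime_iff_eq hp Nat.prime_two).1 h))
    simpa using this
  · obtain ⟨⟨a, b⟩, h⟩ := y
    obtain ⟨a, rfl⟩ := ZMod.intCast_surjective a
    obtain ⟨b, rfl⟩ := ZMod.intCast_surjective b
    simp only at h ⊢
    rw [isUnit_zmod_pow hp hk, isUnit_zmod_pow hp hk]
    by_contra hc
    push Not at hc
    have h' : ((a ^ 2 + b ^ 2 + 1 : ℤ) : ZMod (p ^ k)) = 0 := by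
      push_cast; linear_combination h
    rw [ZMod.intCast_zmod_eq_zero_iff_dvd] at h'
    have h1 : (p : ℤ) ∣ a ^ 2 + b ^ 2 + 1 := by
      refine dvd_trans ?_ h'
      push_cast
      exact dvd_pow_self _ hk
    have h2 : (p : ℤ) ∣ a ^ 2 + b ^ 2 := dvd_add (dvd_pow hc.1 two_ne_zero) (dvd_pow hc.2 two_ne_zero)
    have h3 := (dvd_add_right h2).1 h1
    exact (Nat.prime_iff_prime_int.1 hp).not_isUnit (isUnit_of_dvd_one h3)

lemma card_W_prime {p : ℕ} (hp : p.Prime) (hp2 : p ≠ 2) :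
    (Nat.card (W p) : ℤ) = p - ZMod.χ₄ (p : ZMod 4) := by
  have : Fact p.Prime := ⟨hp⟩
  have hr : ringChar (ZMod p) ≠ 2 := by rwa [ZMod.ringChar_zmod_n]
  set χ := quadraticChar (ZMod p) with hχ
  have hsq : ∀ a : ZMod p, ((univ.filter fun x : ZMod p => x ^ 2 = a).card : ℤ) = χ a + 1 := by
    intro a
    rw [← quadraticChar_card_sqrts hr a]
    congr 2
    ext x; simp
  have hneg := quadraticChar_neg_one hr
  rw [ZMod.card] at hneg
  have h1 : (Nat.card (W p) : ℤ) = ∑ y : ZMod p, (χ (-1 - y ^ 2) + 1) := by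
    rw [Nat.card_eq_fintype_card, Fintype.card_subtype]
    simp_rw [← hsq]
    rw [Finset.card_filter, ← Finset.univ_product_univ, Finset.sum_product_right]
    push_cast
    refine Finset.sum_congr rfl fun y _ => ?_
    rw [Finset.card_filter]
    push_cast
    refine Finset.sum_congr rfl fun x _ => ?_
    simp only [eq_sub_iff_add_eq]
  have h2 : ∀ g : ZMod p → ℤ, ∑ y : ZMod p, g (y ^ 2) = ∑ a, (χ a + 1) * g a := by
    intro g
    rw [← Finset.sum_fiberwise univ (fun y : ZMod p => y ^ 2)]
    refine Finset.sum_congr rfl fun a _ => ?_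
    rw [← hsq, ← nsmul_eq_mul, ← Finset.sum_const]
    refine Finset.sum_congr rfl fun x hx => ?_
    rw [(Finset.mem_filter.1 hx).2]
  have h3 : ∑ a : ZMod p, χ (-1 - a) = 0 := by
    rw [← quadraticChar_sum_zero hr]
    exact Equiv.sum_comp (Equiv.subLeft (-1 : ZMod p)) (fun a => χ a)
  have h4 : ∑ a : ZMod p, χ a * χ (-1 - a) = - χ (-1) := by
    have := jacobiSum_nontrivial_inv (quadraticChar_ne_one hr)
    rw [(quadraticChar_isQuadratic (ZMod p)).inv, jacobiSum] at this
    rw [← this, ← Equiv.sum_comp (Equiv.neg (ZMod p))]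
    refine Finset.sum_congr rfl fun a _ => ?_
    simp only [Equiv.neg_apply]
    rw [← map_mul, ← map_mul]
    congr 1; ring
  rw [h1, Finset.sum_add_distrib, h2 (fun a => χ (-1 - a))]
  simp_rw [add_mul, one_mul]
  rw [Finset.sum_add_distrib, h3, h4, hneg]
  simp
  ring

lemma card_W_pow {p : ℕ} (hp : p.Prime) (hp2 : p ≠ 2) (k : ℕ) :
    (Nat.card (W (p ^ (k + 1))) : ℤ) = p ^ (k + 1) - ZMod.χ₄ (p : ZMod 4) * p ^ k := by
  induction k with
  | zero => simpa using card_W_prime hp hp2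
  | succ k ih =>
    rw [card_W_pow_succ hp hp2 (Nat.succ_ne_zero k)]
    push_cast
    rw [ih]; ring

open ArithmeticFunction

noncomputable def rho : ArithmeticFunction ℤ :=
  ⟨fun n => if Odd n then (Nat.card (W n) : ℤ) else 0, by simp⟩

def kap : ArithmeticFunction ℤ := ⟨fun n => moebius n * ZMod.χ₄ (n : ZMod 4), by simp⟩

def psi : ArithmeticFunction ℤ := ⟨fun n => if Odd n then (n : ℤ) else 0, by simp⟩

lemma card_W_one : Nat.card (W 1) = 1 := by
  rw [Nat.card_eq_one_iff_unique]
  constructor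
  · constructor
    intro a b
    apply Subtype.ext
    exact Subsingleton.elim (α := Fin 1 × Fin 1) _ _
  · exact ⟨⟨(0, 0), Subsingleton.elim (α := Fin 1) _ _⟩⟩

lemma rho_mult : rho.IsMultiplicative := by
  refine ⟨?_, ?_⟩
  · simp only [rho, ArithmeticFunction.coe_mk, card_W_one]; simp
  · intro m n h
    simp only [rho, ArithmeticFunction.coe_mk, Nat.odd_mul]
    by_cases hm : Odd m <;> by_cases hn : Odd n <;> simp [hm, hn, card_W_mul h]

lemma kap_mult : kap.IsMultiplicative := by
  refine ⟨by simp [kap], ?_⟩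
  intro m n h
  simp only [kap, ArithmeticFunction.coe_mk, isMultiplicative_moebius.2 h]
  push_cast
  rw [map_mul]; ring

lemma psi_mult : psi.IsMultiplicative := by
  refine ⟨by simp [psi], ?_⟩
  intro m n h
  simp only [psi, ArithmeticFunction.coe_mk, Nat.odd_mul]
  by_cases hm : Odd m <;> by_cases hn : Odd n <;> simp [hm, hn]

lemma rho_eq : rho = kap * psi := by
  rw [rho_mult.eq_iff_eq_on_prime_powers _ _ (kap_mult.mul psi_mult)]
  intro p k hp
  rcases k with _ | k
  · rw [pow_zero, rho_mult.1, (kap_mult.mul psi_mult).1]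
  · rw [mul_apply, Nat.sum_divisorsAntidiagonal (fun a b => kap a * psi b),
      Nat.divisors_prime_pow hp, Finset.sum_map, Finset.sum_range_succ', Finset.sum_range_succ']
    have h0 : ∑ i ∈ range k, kap (p ^ (i + 1 + 1)) * psi (p ^ (k + 1) / p ^ (i + 1 + 1)) = 0 := by
      apply Finset.sum_eq_zero
      intro i _
      have : kap (p ^ (i + 1 + 1)) = 0 := by
        simp only [kap, ArithmeticFunction.coe_mk]
        rw [moebius_apply_prime_pow hp (by omega)]
        simp
      rw [this, zero_mul]
    simp only [Function.Embedding.coeFn_mk]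
    rw [h0]
    have e1 : p ^ (k + 1) / p ^ (0 + 1) = p ^ k := by
      rw [zero_add, pow_one, pow_succ]; exact Nat.mul_div_cancel _ hp.pos
    rw [e1, pow_zero, Nat.div_one, zero_add, zero_add, pow_one, kap_mult.1]
    simp only [kap, psi, rho, ArithmeticFunction.coe_mk, moebius_apply_prime hp]
    rcases hp.eq_two_or_odd' with rfl | hodd
    · have h4 : ZMod.χ₄ ((2 : ℕ) : ZMod 4) = 0 := by decide
      rw [h4]
      have : ¬ Odd (2 ^ (k + 1)) := by
        rw [Nat.not_odd_iff_even]; exact (even_two.pow_of_ne_zero (Nat.succ_ne_zero k))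
      rw [if_neg this, if_neg this]; simp
    · rw [if_pos hodd.pow, if_pos hodd.pow, if_pos hodd.pow, card_W_pow hp (by rintro rfl; exact absurd hodd (by decide))]
      push_cast; ring

instance finite_P (q : ℕ) : Finite (P q) := by
  have hb : ∀ (x : P q) i, x.1 i ∈ Set.Icc (-(q : ℤ)) q := by
    intro x i
    rw [Set.mem_Icc, ← abs_le]
    apply abs_le_of_sq_le_sq _ (by positivity)
    exact (Finset.single_le_sum (f := fun i => x.1 i ^ 2) (fun i _ => sq_nonneg _)
      (Finset.mem_univ i)).trans x.2.1.le
  refine Finite.of_injective (fun (x : P q) (i : Fin 3) => (⟨x.1 i, hb x i⟩ : Set.Icc (-(q : ℤ)) q)) ?_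
  intro x y h
  apply Subtype.ext
  funext i
  exact congrArg Subtype.val (congrFun h i)

lemma card_P_Pc' (q : ℕ) : Nat.card (P q) = 3 * Nat.card (Pc q 2) := by
  rcases Nat.eq_zero_or_pos (Nat.card (Pc q 2)) with h | h
  · have hE : IsEmpty (P q) := by
      constructor
      intro x
      obtain ⟨i, hi, -⟩ := P_parity x
      have h1 := card_Pc q i
      rw [h, Finite.card_eq_zero_iff] at h1
      exact h1.false ⟨x, hi⟩
    rw [h, Nat.card_of_isEmpty]
  · exact card_P_Pc h

lemma card_P (q : ℕ) (hq : 0 < q) : (Nat.card (P q) : ℤ) = 6 * (kap * psi) q := by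
  rw [← rho_eq]
  simp only [rho, ArithmeticFunction.coe_mk]
  by_cases ho : Odd q
  · rw [if_pos ho]
    have h1 := card_A hq
    have h2 := card_A_Pc ho
    have h3 := card_P_Pc' q
    omega
  · rw [if_neg ho, P_even (Nat.not_odd_iff_even.1 ho)]; simp

end RPS
open Finset

namespace RPS
open ArithmeticFunction

lemma prim_iff (x : Fin 3 → ℤ) (q : ℤ) :
    Nat.gcd (Finset.univ.gcd fun i => (x i).natAbs) q.natAbs = 1 ↔
      ∀ d : ℤ, (∀ i, d ∣ x i) → d ∣ q → IsUnit d := by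
  constructor
  · intro h d hd hq
    rw [Int.isUnit_iff_natAbs_eq]
    apply Nat.eq_one_of_dvd_one
    rw [← h]
    refine Nat.dvd_gcd (Finset.dvd_gcd fun i _ => Int.natAbs_dvd_natAbs.2 (hd i))
      (Int.natAbs_dvd_natAbs.2 hq)
  · intro h
    set g := Nat.gcd (Finset.univ.gcd fun i => (x i).natAbs) q.natAbs with hg
    have := h g (fun i => by
      rw [← Int.dvd_natAbs]
      exact_mod_cast (Nat.gcd_dvd_left _ _).trans
        (Finset.gcd_dvd (f := fun i => (x i).natAbs) (Finset.mem_univ i))) (by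
      rw [← Int.dvd_natAbs]
      exact_mod_cast (Nat.gcd_dvd_right _ _))
    rw [Int.isUnit_iff_natAbs_eq] at this
    simpa using this

lemma count_eq (T : ℝ) (hT : 0 ≤ T) :
    Nat.card {pq : (Fin 3 → ℤ) × ℤ //
            (∑ i, (pq.1 i) ^ 2) = pq.2 ^ 2 ∧ 0 < pq.2 ∧
            Nat.gcd (Finset.univ.gcd fun i => (pq.1 i).natAbs) pq.2.natAbs = 1 ∧
            (pq.2 : ℝ) ≤ T} = ∑ q ∈ Ioc 0 ⌊T⌋₊, Nat.card (P q) := by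
  rw [← Finset.sum_coe_sort, ← Nat.card_sigma]
  refine Nat.card_congr ⟨fun y => ⟨⟨y.1.2.toNat, ?_⟩, ⟨y.1.1, ?_, ?_⟩⟩,
    fun y => ⟨(y.2.1, (y.1.1 : ℤ)), ?_, ?_, ?_, ?_⟩, ?_, ?_⟩
  · obtain ⟨⟨x, q⟩, h1, h2, h3, h4⟩ := y
    simp only at h1 h2 h3 h4 ⊢
    lift q to ℕ using h2.le
    rw [Finset.mem_Ioc]
    refine ⟨by simpa using h2, ?_⟩
    apply Nat.le_floor
    simpa using h4
  · obtain ⟨⟨x, q⟩, h1, h2, h3, h4⟩ := y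
    simp only at h1 h2 h3 h4 ⊢
    rw [Int.toNat_of_nonneg h2.le]; exact h1
  · obtain ⟨⟨x, q⟩, h1, h2, h3, h4⟩ := y
    simp only at h1 h2 h3 h4 ⊢
    rw [Int.toNat_of_nonneg h2.le]; exact (prim_iff _ _).1 h3
  · exact y.2.2.1
  · have := (Finset.mem_Ioc.1 y.1.2).1
    simpa using this
  · exact (prim_iff _ _).2 y.2.2.2
  · have := (Finset.mem_Ioc.1 y.1.2).2
    have h := (Nat.le_floor_iff hT).1 this
    simpa using h
  · rintro ⟨⟨x, q⟩, h1, h2, h3, h4⟩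
    apply Subtype.ext
    simp only
    rw [Int.toNat_of_nonneg h2.le]
  · rintro ⟨⟨q, hq⟩, x⟩
    simp

lemma psi_sum (M : ℕ) : ∑ m ∈ Ioc 0 M, psi m = (((M + 1) / 2 : ℕ) : ℤ) ^ 2 := by
  induction M with
  | zero => simp
  | succ M ih =>
    rw [← Finset.insert_Ioc_right_eq_Ioc_add_one (by omega), Finset.sum_insert (by simp), ih]
    simp only [psi, ArithmeticFunction.coe_mk]
    rcases Nat.even_or_odd' M with ⟨c, rfl | rfl⟩
    · have e1 : (2 * c + 1) / 2 = c := by omega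
      have e2 : (2 * c + 1 + 1) / 2 = c + 1 := by omega
      rw [e1, e2, if_pos ⟨c, rfl⟩]; push_cast; ring
    · have e1 : (2 * c + 1 + 1) / 2 = c + 1 := by omega
      have e2 : (2 * c + 1 + 1 + 1) / 2 = c + 1 := by omega
      rw [e1, e2, if_neg (by rw [Nat.not_odd_iff_even]; exact ⟨c + 1, by ring⟩)]; push_cast; ring

lemma psi_bound (x : ℝ) (hx : 1 ≤ x) :
    |((∑ m ∈ Ioc 0 ⌊x⌋₊, psi m : ℤ) : ℝ) - x ^ 2 / 4| ≤ x := by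
  rw [psi_sum]
  have h1 : (⌊x⌋₊ : ℝ) ≤ x := Nat.floor_le (by linarith)
  have h2 : x < ⌊x⌋₊ + 1 := Nat.lt_floor_add_one x
  set M := ⌊x⌋₊
  set K := (M + 1) / 2 with hK
  have k1 : (M : ℝ) ≤ 2 * K := by exact_mod_cast (by omega : M ≤ 2 * K)
  have k2 : 2 * (K : ℝ) ≤ M + 1 := by exact_mod_cast (by omega : 2 * K ≤ M + 1)
  push_cast
  rw [abs_le]
  constructor <;> nlinarith

lemma kap_abs (n : ℕ) : |(kap n : ℝ)| ≤ 1 := by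
  have : |kap n| ≤ 1 := by
    simp only [kap, ArithmeticFunction.coe_mk, abs_mul]
    have h1 : |moebius n| ≤ 1 := abs_moebius_le_one
    have h2 : |ZMod.χ₄ (n : ZMod 4)| ≤ 1 := by
      generalize (n : ZMod 4) = a
      revert a; decide
    exact mul_le_one₀ h1 (abs_nonneg _) h2
  exact_mod_cast this

noncomputable def chiC : DirichletCharacter ℂ 4 := ZMod.χ₄.ringHomComp (Int.castRingHom ℂ)

lemma kap_hasSum : HasSum (fun n : ℕ => (kap n : ℝ) / (n : ℝ) ^ 2)
    (∑' n : ℕ+, (ZMod.χ₄ ((n : ℕ) : ZMod 4) : ℝ) / (n : ℝ) ^ 2)⁻¹ := by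
  have h2 : (1 : ℝ) < (2 : ℂ).re := by simp
  have hmain := DirichletCharacter.LSeries.mul_mu_eq_one chiC h2
  have hs : LSeriesSummable ((fun n => chiC ((n : ℕ) : ZMod 4)) *
      fun n => ((moebius n : ℤ) : ℂ)) 2 :=
    DirichletCharacter.LSeriesSummable_mul chiC (LSeriesSummable_moebius_iff.2 h2)
  have t1 : ∀ n, LSeries.term (fun n => chiC ((n : ℕ) : ZMod 4)) 2 n =
      (((ZMod.χ₄ ((n : ℕ) : ZMod 4) : ℝ) / (n : ℝ) ^ 2 : ℝ) : ℂ) := by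
    intro n
    rw [LSeries.term_def]
    split_ifs with h
    · simp [h]
    · simp [chiC]
  have t2 : ∀ n, LSeries.term ((fun n => chiC ((n : ℕ) : ZMod 4)) *
      fun n => ((moebius n : ℤ) : ℂ)) 2 n = (((kap n : ℝ) / (n : ℝ) ^ 2 : ℝ) : ℂ) := by
    intro n
    rw [LSeries.term_def]
    split_ifs with h
    · simp [h]
    · simp [chiC, kap, mul_comm]
  have hs' : Summable (fun n : ℕ => (kap n : ℝ) / (n : ℝ) ^ 2) := by
    rw [← Complex.summable_ofReal]
    refine (summable_congr t2).1 hs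
  have hsum1 : Summable (fun n : ℕ => (ZMod.χ₄ ((n : ℕ) : ZMod 4) : ℝ) / (n : ℝ) ^ 2) := by
    rw [← Complex.summable_ofReal]
    exact (summable_congr t1).1 (DirichletCharacter.LSeriesSummable_of_one_lt_re chiC h2)
  have hp : ∑' n : ℕ+, (ZMod.χ₄ ((n : ℕ) : ZMod 4) : ℝ) / (n : ℝ) ^ 2 =
      ∑' n : ℕ, (ZMod.χ₄ ((n : ℕ) : ZMod 4) : ℝ) / (n : ℝ) ^ 2 := by
    have := tsum_pnat_eq_tsum_succ (f := fun n : ℕ => (ZMod.χ₄ ((n : ℕ) : ZMod 4) : ℝ) / (n : ℝ) ^ 2)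
    rw [this, hsum1.tsum_eq_zero_add]
    simp
  rw [hp]
  have hprod : (∑' n : ℕ, (ZMod.χ₄ ((n : ℕ) : ZMod 4) : ℝ) / (n : ℝ) ^ 2) *
      (∑' n : ℕ, (kap n : ℝ) / (n : ℝ) ^ 2) = 1 := by
    unfold LSeries at hmain
    rw [tsum_congr t1, tsum_congr t2, ← Complex.ofReal_tsum, ← Complex.ofReal_tsum] at hmain
    exact_mod_cast hmain
  rw [inv_eq_of_mul_eq_one_right hprod]
  exact hs'.hasSum

lemma kap_tail (N : ℕ) (hN : N ≠ 0) {G : ℝ}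
    (hG : HasSum (fun n : ℕ => (kap n : ℝ) / (n : ℝ) ^ 2) G) :
    |(∑ n ∈ Ioc 0 N, (kap n : ℝ) / (n : ℝ) ^ 2) - G| ≤ (N : ℝ)⁻¹ := by
  have h1 := hG.tendsto_sum_nat
  have h2 : Filter.Tendsto (fun M : ℕ => |(∑ n ∈ Ioc 0 N, (kap n : ℝ) / (n : ℝ) ^ 2) -
      ∑ n ∈ range M, (kap n : ℝ) / (n : ℝ) ^ 2|) Filter.atTop
      (nhds |(∑ n ∈ Ioc 0 N, (kap n : ℝ) / (n : ℝ) ^ 2) - G|) :=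
    (tendsto_const_nhds.sub h1).abs
  refine le_of_tendsto h2 ?_
  filter_upwards [Filter.eventually_ge_atTop (N + 1)] with M hM
  obtain ⟨L, rfl⟩ : ∃ L, M = L + 1 := ⟨M - 1, by omega⟩
  have hL : N ≤ L := by omega
  have e : ∑ n ∈ range (L + 1), (kap n : ℝ) / (n : ℝ) ^ 2 =
      ∑ n ∈ Ioc 0 L, (kap n : ℝ) / (n : ℝ) ^ 2 := by
    rw [Finset.range_eq_Ico, Finset.sum_eq_sum_Ico_succ_bot (by omega)]
    simp
    rfl
  rw [e, ← Finset.sum_Ioc_consecutive _ (Nat.zero_le N) hL, sub_add_cancel_left, abs_neg]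
  calc |∑ n ∈ Ioc N L, (kap n : ℝ) / (n : ℝ) ^ 2|
      ≤ ∑ n ∈ Ioc N L, |(kap n : ℝ) / (n : ℝ) ^ 2| := Finset.abs_sum_le_sum_abs _ _
    _ ≤ ∑ n ∈ Ioc N L, ((n : ℝ) ^ 2)⁻¹ := by
        refine Finset.sum_le_sum fun n _ => ?_
        rw [abs_div, abs_of_nonneg (sq_nonneg (n : ℝ)), div_eq_mul_inv]
        exact mul_le_of_le_one_left (by positivity) (kap_abs n)
    _ ≤ (N : ℝ)⁻¹ - (L : ℝ)⁻¹ := sum_Ioc_inv_sq_le_sub hN hL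
    _ ≤ (N : ℝ)⁻¹ := by
        have : (0 : ℝ) ≤ (L : ℝ)⁻¹ := by positivity
        linarith

lemma main_bound (T : ℝ) (hT : 1 ≤ T) {G : ℝ}
    (hG : HasSum (fun n : ℕ => (kap n : ℝ) / (n : ℝ) ^ 2) G) :
    |((∑ q ∈ Ioc 0 ⌊T⌋₊, Nat.card (P q) : ℕ) : ℝ) - 3 / 2 * G * T ^ 2| ≤
      6 * (T * (1 + Real.log T)) + 3 * T := by
  set N := ⌊T⌋₊ with hN
  have hN0 : N ≠ 0 := by
    have := Nat.le_floor (α := ℝ) (n := 1) (a := T) (by simpa using hT)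
    omega
  have hNT : (N : ℝ) ≤ T := Nat.floor_le (by linarith)
  have hNT2 : T < N + 1 := Nat.lt_floor_add_one T
  have hN1 : (1 : ℝ) ≤ N := by exact_mod_cast Nat.pos_of_ne_zero hN0
  have e1 : ((∑ q ∈ Ioc 0 N, Nat.card (P q) : ℕ) : ℝ) =
      6 * ∑ d ∈ Ioc 0 N, (kap d : ℝ) * ((∑ m ∈ Ioc 0 ⌊T / d⌋₊, psi m : ℤ) : ℝ) := by
    have : ((∑ q ∈ Ioc 0 N, Nat.card (P q) : ℕ) : ℤ) =
        6 * ∑ d ∈ Ioc 0 N, kap d * ∑ m ∈ Ioc 0 (N / d), psi m := by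
      rw [← sum_Ioc_mul_eq_sum_sum, Finset.mul_sum]
      push_cast
      exact Finset.sum_congr rfl fun q hq => card_P q (Finset.mem_Ioc.1 hq).1
    have h2 := congrArg (fun z : ℤ => (z : ℝ)) this
    simp only [Nat.floor_div_natCast, ← hN]
    push_cast at h2 ⊢
    exact h2
  have e2 : |(∑ d ∈ Ioc 0 N, (kap d : ℝ) * ((∑ m ∈ Ioc 0 ⌊T / d⌋₊, psi m : ℤ) : ℝ)) -
      T ^ 2 / 4 * ∑ d ∈ Ioc 0 N, (kap d : ℝ) / (d : ℝ) ^ 2| ≤ T * (1 + Real.log T) := by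
    rw [Finset.mul_sum, ← Finset.sum_sub_distrib]
    calc _ ≤ ∑ d ∈ Ioc 0 N, T * (d : ℝ)⁻¹ := by
          refine (Finset.abs_sum_le_sum_abs _ _).trans (Finset.sum_le_sum fun d hd => ?_)
          obtain ⟨hd0, hdN⟩ := Finset.mem_Ioc.1 hd
          have hd0' : (0 : ℝ) < d := by exact_mod_cast hd0
          have hdT : (d : ℝ) ≤ T := le_trans (by exact_mod_cast hdN) hNT
          have hb := psi_bound (T / d) ((one_le_div hd0').2 hdT)
          have : (kap d : ℝ) * ((∑ m ∈ Ioc 0 ⌊T / d⌋₊, psi m : ℤ) : ℝ) -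
              T ^ 2 / 4 * ((kap d : ℝ) / (d : ℝ) ^ 2) =
              kap d * (((∑ m ∈ Ioc 0 ⌊T / d⌋₊, psi m : ℤ) : ℝ) - (T / d) ^ 2 / 4) := by
            field_simp
          rw [this, abs_mul, ← div_eq_mul_inv]
          exact (mul_le_of_le_one_left (abs_nonneg _) (kap_abs d)).trans hb
      _ = T * (harmonic N : ℝ) := by
          rw [← Finset.mul_sum, harmonic_eq_sum_Icc]
          push_cast
          rfl
      _ ≤ T * (1 + Real.log T) := by
          refine mul_le_mul_of_nonneg_left ?_ (by linarith)
          refine (harmonic_le_one_add_log N).trans ?_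
          have := Real.log_le_log (by linarith) hNT
          linarith
  have e3 := kap_tail N hN0 hG
  have e4 : T ^ 2 / 4 * (N : ℝ)⁻¹ ≤ T / 2 := by
    rw [← div_eq_mul_inv, div_le_iff₀ (by linarith)]
    nlinarith
  rw [e1]
  set X := ∑ d ∈ Ioc 0 N, (kap d : ℝ) * ((∑ m ∈ Ioc 0 ⌊T / d⌋₊, psi m : ℤ) : ℝ)
  set Y := ∑ d ∈ Ioc 0 N, (kap d : ℝ) / (d : ℝ) ^ 2
  have e5 : |T ^ 2 / 4 * (Y - G)| ≤ T / 2 := by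
    rw [abs_mul, abs_of_nonneg (by positivity)]
    exact (mul_le_mul_of_nonneg_left e3 (by positivity)).trans e4
  have : 6 * X - 3 / 2 * G * T ^ 2 = 6 * ((X - T ^ 2 / 4 * Y) + T ^ 2 / 4 * (Y - G)) := by ring
  rw [this, abs_mul, abs_of_nonneg (by norm_num : (0 : ℝ) ≤ 6)]
  have := abs_add_le (X - T ^ 2 / 4 * Y) (T ^ 2 / 4 * (Y - G))
  linarith

end RPS

/-- `N(S²;T) = (3/(2G)) T² + O(T (log T)³)`, where `N(S²;T)` counts primitive integer
solutions of `p₁²+p₂²+p₃² = q²` with `0 < q ≤ T` and `G = L(χ₋₄,2)` is Catalan's constant. -/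
theorem rational_points_sphere_two_asymptotic :
    (fun T : ℝ =>
      ((Nat.card {pq : (Fin 3 → ℤ) × ℤ //
            (∑ i, (pq.1 i) ^ 2) = pq.2 ^ 2 ∧ 0 < pq.2 ∧
            Nat.gcd (Finset.univ.gcd fun i => (pq.1 i).natAbs) pq.2.natAbs = 1 ∧
            (pq.2 : ℝ) ≤ T} : ℝ))
        - (3 / (2 * ∑' n : ℕ+, (ZMod.χ₄ ((n : ℕ) : ZMod 4) : ℝ) / (n : ℝ) ^ 2)) * T ^ 2)
      =O[Filter.atTop] fun T : ℝ => T * Real.log T ^ 3 := by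
  refine Asymptotics.IsBigO.of_bound 15 ?_
  filter_upwards [Filter.eventually_ge_atTop (Real.exp 1)] with T hT
  have hT1 : 1 ≤ T := le_trans (by have := Real.add_one_le_exp 1; linarith) hT
  have hlog : 1 ≤ Real.log T := by
    rw [Real.le_log_iff_exp_le (by linarith)]; exact hT
  have hb := RPS.main_bound T hT1 RPS.kap_hasSum
  rw [RPS.count_eq T (by linarith)]
  set G := ∑' n : ℕ+, (ZMod.χ₄ ((n : ℕ) : ZMod 4) : ℝ) / (n : ℝ) ^ 2
  have e : 3 / (2 * G) = 3 / 2 * G⁻¹ := by rw [← div_div, div_eq_mul_inv]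
  rw [e, Real.norm_eq_abs, Real.norm_eq_abs]
  have hl3 : Real.log T ≤ Real.log T ^ 3 := le_self_pow₀ hlog (by norm_num)
  rw [abs_of_nonneg (by positivity : 0 ≤ T * Real.log T ^ 3)]
  refine hb.trans ?_
  nlinarith
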